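/- Let H be a reflexive digraph and let T be a tournament on V(H) consistent with H. Suppose u, v, w are vertices with u → v, v → w, w → u in T and (u,v) ∈ E(H). Then (v,u), (v,w), (w,v), (u,w), (w,u) ∈ E(H); that is, {u,v,w} is complete in H. -/

import Mathlib

/-- A digraph on vertex type `V` is given by its edge relation `E : V → V → Prop`
(loops allowed).  The min-ordering property for a strict linear order `r`:
for any edges `(u,v)` and `(u',v')` with `r u u'` and `r v' v`, `(u,v')` is also an edge. -/
def MinOrderProp {V : Type*} (E r : V → V → Prop) : Prop :=
  ∀ u v u' v' : V, E u v → E u' v' → r u u' → r v' v → E u v'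

/-- The edge relation of the pair digraph `H⁺` of a digraph with edge relation `E`:
for all vertices `u, u', v, v'`, there are edges `(u,u') → (v,v')` and `(v',v) → (u',u)`
whenever `E u v`, `E u' v'`, `¬ E u v'`, and the endpoints have distinct coordinates. -/
def pairEdge {V : Type*} (E : V → V → Prop) (p q : V × V) : Prop :=
  ∃ u u' v v' : V, u ≠ u' ∧ v ≠ v' ∧ E u v ∧ E u' v' ∧ ¬ E u v' ∧
    ((p = (u, u') ∧ q = (v, v')) ∨ (p = (v', v) ∧ q = (u', u)))

/-- The edge relation of the implication graph `H*` of a reflexive digraph with edge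
relation `E`: for any three distinct vertices `u, v, w`, there are edges
`(u,v) → (w,v)` and `(v,w) → (v,u)` iff `[E u w ∧ ¬ E u v]` or `[E w u ∧ ¬ E v u]`. -/
def implEdge {V : Type*} (E : V → V → Prop) (p q : V × V) : Prop :=
  ∃ u v w : V, u ≠ v ∧ v ≠ w ∧ u ≠ w ∧
    ((E u w ∧ ¬ E u v) ∨ (E w u ∧ ¬ E v u)) ∧
    ((p = (u, v) ∧ q = (w, v)) ∨ (p = (v, w) ∧ q = (v, u)))

/-- A tournament on `V`: for each pair of distinct vertices exactly one of the two
directed edges is present, and there are no loops. -/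
def IsTournamentRel {V : Type*} (T : V → V → Prop) : Prop :=
  (∀ u, ¬ T u u) ∧ ∀ u v : V, u ≠ v → (T u v ↔ ¬ T v u)

/-- A tournament (orientation of the complete graph) `T` is consistent with the digraph `E`
if for every vertex `(u,v)` of the implication graph and every vertex `(u',v')` reachable
from `(u,v)` by a directed walk in the implication graph, `u → v` in `T` implies
`u' → v'` in `T`. -/
def ConsistentWith {V : Type*} (E T : V → V → Prop) : Prop :=
  ∀ u v u' v' : V, u ≠ v → u' ≠ v' →
    Relation.ReflTransGen (implEdge E) (u, v) (u', v') → T u v → T u' v'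

/-- `u, v` form an invertible pair of the digraph `E`: they are distinct and `(u,v)` and
`(v,u)` lie in the same strong component of the pair digraph. -/
def InvertiblePair {V : Type*} (E : V → V → Prop) (u v : V) : Prop :=
  u ≠ v ∧ Relation.ReflTransGen (pairEdge E) (u, v) (v, u) ∧
    Relation.ReflTransGen (pairEdge E) (v, u) (u, v)

/-- The tournament obtained from `T` by reversing the direction of all edges `(x, y)` of `T`
with `u → x`, `x → y`, `y → u` in `T` (the set `E_u`). -/
def revTri {V : Type*} (T : V → V → Prop) (u : V) (x y : V) : Prop :=
  (T x y ∧ ¬ (T u x ∧ T x y ∧ T y u)) ∨ (T y x ∧ T u y ∧ T x u)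

/-!
If `a → b → c` in `T`, then `H*` has no edge from `(a, b)` to `(c, b)`, since consistency would
then give `c → b`. Hence an `H`-edge between `a` and `c`, in either direction, forces the `H`-edge
between `a` and `b` in the same direction. Applied to the three paths of a cyclic triangle, these
implications run from `(u, v)` through all six ordered pairs.
-/

theorem IsTournamentRel.asymm {V : Type*} {T : V → V → Prop} (hT : IsTournamentRel T) :
    Std.Asymm T where
  asymm a b hab hba := by
    have hne : a ≠ b := by
      rintro rfl
      exact hT.1 a hab
    exact (hT.2 a b hne).1 hab hba

namespace ConsistentWith

variable {V : Type*} {E T : V → V → Prop} {a b c d : V}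

theorem rel_of_implEdge (hcons : ConsistentWith E T) (hab : a ≠ b) (hcd : c ≠ d)
    (hedge : implEdge E (a, b) (c, d)) (hTab : T a b) : T c d :=
  hcons a b c d hab hcd (.single hedge) hTab

variable [Std.Asymm T]

theorem not_implEdge_of_path (hcons : ConsistentWith E T) (hab : T a b) (hbc : T b c) :
    ¬ implEdge E (a, b) (c, b) := fun hedge =>
  asymm hbc (hcons.rel_of_implEdge (ne_of_irrefl hab) (ne_of_irrefl hbc).symm hedge hab)

theorem not_implEdge_condition_of_path (hcons : ConsistentWith E T) (hab : T a b) (hbc : T b c) :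
    ¬ ((E a c ∧ ¬ E a b) ∨ (E c a ∧ ¬ E b a)) := by
  intro hcond
  have hac : a ≠ c := by
    rintro rfl
    exact asymm hab hbc
  exact hcons.not_implEdge_of_path hab hbc
    ⟨a, b, c, ne_of_irrefl hab, ne_of_irrefl hbc, hac, hcond, .inl ⟨rfl, rfl⟩⟩

theorem edge_to_mid_of_edge_to_end (hcons : ConsistentWith E T) (hab : T a b) (hbc : T b c)
    (hac : E a c) : E a b :=
  of_not_not fun hnab => hcons.not_implEdge_condition_of_path hab hbc (.inl ⟨hac, hnab⟩)

theorem edge_from_mid_of_edge_from_end (hcons : ConsistentWith E T) (hab : T a b) (hbc : T b c)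
    (hca : E c a) : E b a :=
  of_not_not fun hnba => hcons.not_implEdge_condition_of_path hab hbc (.inr ⟨hca, hnba⟩)

end ConsistentWith

theorem stmt_16_general {V : Type*} {E T : V → V → Prop} [Std.Asymm T]
    (hcons : ConsistentWith E T) {u v w : V} (hTuv : T u v) (hTvw : T v w) (hTwu : T w u)
    (huv : E u v) : E v u ∧ E v w ∧ E w v ∧ E u w ∧ E w u := by
  have hwv : E w v := hcons.edge_from_mid_of_edge_from_end hTvw hTwu huv
  have hwu : E w u := hcons.edge_to_mid_of_edge_to_end hTwu hTuv hwv
  have hvu : E v u := hcons.edge_from_mid_of_edge_from_end hTuv hTvw hwu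
  have hvw : E v w := hcons.edge_to_mid_of_edge_to_end hTvw hTwu hvu
  have huw : E u w := hcons.edge_from_mid_of_edge_from_end hTwu hTuv hvw
  exact ⟨hvu, hvw, hwv, huw, hwu⟩

/-- Let `T` be a tournament consistent with a reflexive digraph `H`, with
`u → v`, `v → w`, `w → u` in `T` and `(u,v) ∈ E(H)`.  Then `{u,v,w}` is complete in `H`. -/
theorem stmt_16 {V : Type*} [Fintype V] (E : V → V → Prop) (hrefl : ∀ v, E v v)
    (T : V → V → Prop) (hT : IsTournamentRel T) (hcons : ConsistentWith E T)
    (u v w : V) (h1 : T u v) (h2 : T v w) (h3 : T w u) (huv : E u v) :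
    E v u ∧ E v w ∧ E w v ∧ E u w ∧ E w u := by
  have := hT.asymm
  exact stmt_16_general hcons h1 h2 h3 huv
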